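/- Let c > 0. There exist constants s > 0, c̃ ∈ (0,1), κ > 0 and N₀ ∈ ℕ, depending only on c, with the following property: for every N ≥ N₀ and every set A of N positive integers with E(A) > cN³, the set of α ∈ [0,1] satisfying (1/N)·#{ (a,b) ∈ A × A : a ≠ b, ‖(a−b)α‖ ≤ s/N } ≤ 2·c̃·s has Lebesgue measure at least κ. -/

import Mathlib

open Filter MeasureTheory
open scoped Classical

/-- Distance from a real number to the nearest integer. -/
noncomputable def dni (x : ℝ) : ℝ := |x - round x|

/-- Additive energy of a finite set of naturals:
`#{(a,b,c,d) ∈ I⁴ : a + b = c + d}`. -/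
def addEnergy (A : Finset ℕ) : ℕ :=
  (((A ×ˢ A) ×ˢ (A ×ˢ A)).filter fun q => q.1.1 + q.1.2 = q.2.1 + q.2.2).card

/-- The number of representations of `n` as a difference of two elements of `A`. -/
noncomputable def diffRep (A : Finset ℕ) (n : ℤ) : ℕ :=
  ((A ×ˢ A).filter fun p => (p.1 : ℤ) - (p.2 : ℤ) = n).card

/-- The pairs of distinct elements of `A` whose difference has at least `t` representations. -/
noncomputable def popularPairs (A : Finset ℕ) (t : ℝ) : Finset (ℕ × ℕ) :=
  A.offDiag.filter fun p => t ≤ (diffRep A ((p.1 : ℤ) - (p.2 : ℤ)) : ℝ)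

/-- The points of the line at which `n * α` lies within `δ` of an integer. -/
def nearIntegerSet (n : ℤ) (δ : ℝ) : Set ℝ := {α | dni (n * α) ≤ δ}

lemma measurableSet_nearIntegerSet (n : ℤ) (δ : ℝ) : MeasurableSet (nearIntegerSet n δ) := by
  have h : nearIntegerSet n δ =
      (fun α : ℝ => ‖((n * α : ℝ) : UnitAddCircle)‖) ⁻¹' Set.Iic δ := by
    ext α
    simp only [nearIntegerSet, dni, Set.mem_preimage, Set.mem_Iic, UnitAddCircle.norm_eq,
      Set.mem_ofPred_eq]
  rw [h]
  have hcont : Continuous fun α : ℝ => ‖((n * α : ℝ) : UnitAddCircle)‖ :=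
    ((AddCircle.continuous_mk' 1).comp (continuous_const.mul continuous_id)).norm
  exact hcont.measurable measurableSet_Iic

lemma volume_nearIntegerSet {n : ℤ} (hn : n ≠ 0) {δ : ℝ} (hδ₀ : 0 ≤ δ) (hδ : δ ≤ 1 / 2) :
    (volume.restrict (Set.Icc (0 : ℝ) 1)).real (nearIntegerSet n δ) = 2 * δ := by
  have hmk := UnitAddCircle.measurePreserving_mk 0
  have hmul : MeasurePreserving (fun x : UnitAddCircle => n • x) volume volume :=
    Measure.measurePreserving_zsmul volume hn
  have hball := (hmul.comp hmk).measure_preimage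
    (Metric.isClosed_closedBall (x := (0 : UnitAddCircle)) (ε := δ)).measurableSet.nullMeasurableSet
  have hset : ((fun x : UnitAddCircle => n • x) ∘ fun a : ℝ => (a : UnitAddCircle)) ⁻¹'
      Metric.closedBall 0 δ = nearIntegerSet n δ := by
    ext α
    have h : n • (α : UnitAddCircle) = ((n * α : ℝ) : UnitAddCircle) := by
      rw [← zsmul_eq_mul, AddCircle.coe_zsmul]
    simp only [Set.mem_preimage, Function.comp_apply, mem_closedBall_zero_iff, h,
      UnitAddCircle.norm_eq, nearIntegerSet, dni, Set.mem_ofPred_eq]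
  rw [hset, AddCircle.volume_closedBall, min_eq_right (by linarith), zero_add] at hball
  rw [measureReal_def, restrict_Ioc_eq_restrict_Icc.symm, hball,
    ENNReal.toReal_ofReal (by linarith)]

lemma addEnergy_eq_sum_diffRep (A : Finset ℕ) :
    addEnergy A = ∑ p ∈ A ×ˢ A, diffRep A ((p.1 : ℤ) - (p.2 : ℤ)) := by
  have h : addEnergy A = (((A ×ˢ A) ×ˢ (A ×ˢ A)).filter fun q =>
      (q.2.1 : ℤ) - (q.2.2 : ℤ) = (q.1.1 : ℤ) - (q.1.2 : ℤ)).card := by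
    refine Finset.card_bij' (fun q _ => ((q.1.1, q.2.1), (q.2.2, q.1.2)))
      (fun q _ => ((q.1.1, q.2.2), (q.1.2, q.2.1))) ?_ ?_ ?_ ?_
    · rintro ⟨⟨a, b⟩, ⟨d, e⟩⟩ hq
      simp only [Finset.mem_filter, Finset.mem_product] at hq ⊢
      refine ⟨by tauto, by lia⟩
    · rintro ⟨⟨a, b⟩, ⟨d, e⟩⟩ hq
      simp only [Finset.mem_filter, Finset.mem_product] at hq ⊢
      refine ⟨by tauto, by lia⟩
    · rintro ⟨⟨a, b⟩, ⟨d, e⟩⟩ _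
      rfl
    · rintro ⟨⟨a, b⟩, ⟨d, e⟩⟩ _
      rfl
  rw [h, Finset.card_filter, Finset.sum_product]
  refine Finset.sum_congr rfl fun p _ => ?_
  rw [diffRep, Finset.card_filter]

lemma diffRep_le_card (A : Finset ℕ) (n : ℤ) : diffRep A n ≤ A.card := by
  refine Finset.card_le_card_of_injOn Prod.fst ?_ ?_
  · intro p hp
    simp only [Finset.coe_filter, Finset.mem_product, Set.mem_ofPred_eq] at hp
    exact hp.1.1
  · rintro ⟨a, b⟩ hp ⟨d, e⟩ hq h
    simp only [Finset.coe_filter, Finset.mem_product, Set.mem_ofPred_eq] at hp hq h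
    ext <;> simp only <;> lia

/-- Large additive energy forces many popular pairs. -/
lemma addEnergy_le_card_popularPairs (A : Finset ℕ) {t : ℝ} (ht : 0 ≤ t) :
    (addEnergy A : ℝ) ≤
      (A.card : ℝ) ^ 2 + t * (A.card : ℝ) ^ 2 + (popularPairs A t).card * (A.card : ℝ) := by
  set r : ℕ × ℕ → ℝ := fun p => (diffRep A ((p.1 : ℤ) - (p.2 : ℤ)) : ℝ)
  have hr (p : ℕ × ℕ) : r p ≤ A.card := Nat.cast_le.mpr (diffRep_le_card A _)
  have hE : (addEnergy A : ℝ) = ∑ p ∈ A.diag, r p + ∑ p ∈ A.offDiag, r p := by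
    rw [addEnergy_eq_sum_diffRep, ← Finset.diag_union_offDiag,
      Finset.sum_union (Finset.disjoint_diag_offDiag A)]
    push_cast
    rfl
  have hdiag : ∑ p ∈ A.diag, r p ≤ (A.card : ℝ) ^ 2 := by
    refine (Finset.sum_le_card_nsmul _ _ _ fun p _ => hr p).trans_eq ?_
    rw [Finset.diag_card, nsmul_eq_mul, sq]
  have hpop : ∑ p ∈ popularPairs A t, r p ≤ (popularPairs A t).card * (A.card : ℝ) := by
    refine (Finset.sum_le_card_nsmul _ _ _ fun p _ => hr p).trans_eq (nsmul_eq_mul _ _)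
  have hrest : ∑ p ∈ A.offDiag.filter (fun p => ¬ t ≤ r p), r p ≤ t * (A.card : ℝ) ^ 2 := by
    refine (Finset.sum_le_card_nsmul _ _ t fun p hp => ?_).trans ?_
    · exact (not_le.mp (Finset.mem_filter.mp hp).2).le
    · have hsub : A.offDiag.filter (fun p => ¬ t ≤ r p) ⊆ A ×ˢ A := fun p hp => by
        have := Finset.mem_offDiag.mp (Finset.mem_filter.mp hp).1
        exact Finset.mem_product.mpr ⟨this.1, this.2.1⟩
      have hcard : ((A.offDiag.filter (fun p => ¬ t ≤ r p)).card : ℝ) ≤ (A.card : ℝ) ^ 2 := by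
        have := Finset.card_le_card hsub
        rw [Finset.card_product, ← sq] at this
        exact_mod_cast this
      rw [nsmul_eq_mul, mul_comm]
      exact mul_le_mul_of_nonneg_left hcard ht
  have hsplit := Finset.sum_filter_add_sum_filter_not A.offDiag (fun p => t ≤ r p) r
  have hpop' : ∑ p ∈ A.offDiag.filter (fun p => t ≤ r p), r p ≤
      (popularPairs A t).card * (A.card : ℝ) := hpop
  linarith

/-- There are few popular differences. -/
lemma card_image_popularPairs_mul_le (A : Finset ℕ) (t : ℝ) :
    (((popularPairs A t).image fun p => (p.1 : ℤ) - (p.2 : ℤ)).card : ℝ) * t ≤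
      (A.card : ℝ) ^ 2 := by
  set D := (popularPairs A t).image fun p => (p.1 : ℤ) - (p.2 : ℤ)
  have hD : ∀ n ∈ D, t ≤ (diffRep A n : ℝ) := by
    intro n hn
    obtain ⟨p, hp, rfl⟩ := Finset.mem_image.mp hn
    exact (Finset.mem_filter.mp hp).2
  have hsum : ∑ n ∈ D, diffRep A n ≤ A.card ^ 2 := by
    rw [sq, ← Finset.card_product]
    simp only [diffRep]
    rw [← Finset.card_biUnion]
    · exact Finset.card_le_card (Finset.biUnion_subset.mpr fun n _ => Finset.filter_subset _ _)
    · intro m _ n _ hmn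
      refine Finset.disjoint_filter.mpr fun p _ hm hn => hmn (hm.symm.trans hn)
  calc (D.card : ℝ) * t = D.card • t := (nsmul_eq_mul _ _).symm
    _ ≤ ∑ n ∈ D, (diffRep A n : ℝ) := Finset.card_nsmul_le_sum _ _ _ hD
    _ ≤ (A.card : ℝ) ^ 2 := by exact_mod_cast hsum

lemma measureReal_biUnion_nearIntegerSet_le {D : Finset ℤ} (hD : ∀ n ∈ D, n ≠ 0) {δ : ℝ}
    (hδ₀ : 0 ≤ δ) (hδ : δ ≤ 1 / 2) :
    (volume.restrict (Set.Icc (0 : ℝ) 1)).real (⋃ n ∈ D, nearIntegerSet n δ) ≤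
      D.card * (2 * δ) := by
  refine (measureReal_biUnion_finset_le _ _).trans_eq ?_
  rw [Finset.sum_congr rfl fun n hn => volume_nearIntegerSet (hD n hn) hδ₀ hδ,
    Finset.sum_const, nsmul_eq_mul]

/-- Markov's inequality for the number of pairs in `P` whose difference is, after dilation by `α`,
within `δ` of an integer. -/
lemma mul_measureReal_le_card_pairs {P : Finset (ℕ × ℕ)} (hP : ∀ p ∈ P, p.1 ≠ p.2) {δ : ℝ}
    (hδ₀ : 0 ≤ δ) (hδ : δ ≤ 1 / 2) (t : ℝ) :
    t * (volume.restrict (Set.Icc (0 : ℝ) 1)).real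
        {α | t ≤ ((P.filter fun p => dni (((p.1 : ℝ) - (p.2 : ℝ)) * α) ≤ δ).card : ℝ)} ≤
      P.card * (2 * δ) := by
  set μ := volume.restrict (Set.Icc (0 : ℝ) 1)
  set T : ℕ × ℕ → Set ℝ := fun p => nearIntegerSet ((p.1 : ℤ) - (p.2 : ℤ)) δ
  have hf : (fun α => ((P.filter fun p => dni (((p.1 : ℝ) - (p.2 : ℝ)) * α) ≤ δ).card : ℝ)) =
      fun α => ∑ p ∈ P, (T p).indicator (fun _ => (1 : ℝ)) α := by
    ext α
    rw [Finset.card_filter]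
    push_cast
    refine Finset.sum_congr rfl fun p _ => ?_
    simp [T, nearIntegerSet, Set.indicator_apply]
  have hT_int (p : ℕ × ℕ) : Integrable ((T p).indicator fun _ => (1 : ℝ)) μ :=
    (integrable_const 1).indicator (measurableSet_nearIntegerSet _ _)
  have hmarkov := mul_meas_ge_le_integral_of_nonneg (μ := μ)
    (f := fun α => ((P.filter fun p => dni (((p.1 : ℝ) - (p.2 : ℝ)) * α) ≤ δ).card : ℝ))
    (Eventually.of_forall fun α => Nat.cast_nonneg _)
    (by rw [hf]; exact integrable_finsetSum _ fun p _ => hT_int p) t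
  refine hmarkov.trans_eq ?_
  rw [hf, integral_finsetSum _ fun p _ => hT_int p, ← nsmul_eq_mul, ← Finset.sum_const]
  refine Finset.sum_congr rfl fun p hp => ?_
  have hne : (p.1 : ℤ) - (p.2 : ℤ) ≠ 0 := by
    have := hP p hp
    lia
  rw [integral_indicator_const _ (measurableSet_nearIntegerSet _ _), smul_eq_mul, mul_one]
  exact volume_nearIntegerSet hne hδ₀ hδ

/-- Lower bound for the measure of the set of few close pairs: away from the popular differences,
which are few, only the unpopular pairs contribute. -/
lemma one_le_measureReal_few_pairs (A : Finset ℕ) (t δ u : ℝ) :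
    1 ≤ (volume.restrict (Set.Icc (0 : ℝ) 1)).real
        {α | (((A ×ˢ A).filter fun p =>
          p.1 ≠ p.2 ∧ dni (((p.1 : ℝ) - (p.2 : ℝ)) * α) ≤ δ).card : ℝ) ≤ u} +
      (volume.restrict (Set.Icc (0 : ℝ) 1)).real
        (⋃ n ∈ (popularPairs A t).image fun p => (p.1 : ℤ) - (p.2 : ℤ), nearIntegerSet n δ) +
      (volume.restrict (Set.Icc (0 : ℝ) 1)).real
        {α | u ≤ (((A.offDiag \ popularPairs A t).filter fun p =>
          dni (((p.1 : ℝ) - (p.2 : ℝ)) * α) ≤ δ).card : ℝ)} := by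
  set μ := volume.restrict (Set.Icc (0 : ℝ) 1)
  have huniv : μ.real Set.univ = 1 := by simp [μ, measureReal_def]
  rw [← huniv]
  refine (measureReal_mono ?_).trans
    ((measureReal_union_le _ _).trans (add_le_add_left (measureReal_union_le _ _) _))
  intro α _
  by_cases hS : α ∈ ⋃ n ∈ (popularPairs A t).image fun p => (p.1 : ℤ) - (p.2 : ℤ),
      nearIntegerSet n δ
  · exact Or.inl (Or.inr hS)
  by_cases hG : (((A ×ˢ A).filter fun p =>
      p.1 ≠ p.2 ∧ dni (((p.1 : ℝ) - (p.2 : ℝ)) * α) ≤ δ).card : ℝ) ≤ u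
  · exact Or.inl (Or.inl hG)
  refine Or.inr ((not_le.mp hG).le.trans ?_)
  refine Nat.cast_le.mpr (Finset.card_le_card fun p hp => ?_)
  simp only [Finset.mem_filter, Finset.mem_product] at hp
  simp only [Finset.mem_filter, Finset.mem_sdiff, Finset.mem_offDiag]
  refine ⟨⟨⟨hp.1.1, hp.1.2, hp.2.1⟩, fun hpop => hS ?_⟩, hp.2.2⟩
  refine Set.mem_biUnion (Finset.mem_coe.mpr (Finset.mem_image_of_mem _ hpop)) ?_
  simpa [nearIntegerSet] using hp.2.2

/-- The quantitative form for energy density `c ≤ 1`. -/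
lemma measureReal_few_pairs_ge {c : ℝ} (hc : 0 < c) (hc₁ : c ≤ 1) {A : Finset ℕ}
    (hA : 4 / c ≤ (A.card : ℝ)) (hE : c * (A.card : ℝ) ^ 3 ≤ (addEnergy A : ℝ)) :
    c / 8 ≤ (volume.restrict (Set.Icc (0 : ℝ) 1)).real
      {α | (((A ×ˢ A).filter fun p => p.1 ≠ p.2 ∧
          dni (((p.1 : ℝ) - (p.2 : ℝ)) * α) ≤ c ^ 2 / 64 / A.card).card : ℝ) ≤
        2 * (1 - c / 4) * (c ^ 2 / 64) * A.card} := by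
  set N : ℝ := (A.card : ℝ)
  have hcN : 4 ≤ c * N := by rwa [div_le_iff₀' hc] at hA
  have hN₄ : 4 ≤ N := by nlinarith
  have hN : 0 < N := by linarith
  have hδ₀ : 0 ≤ c ^ 2 / 64 / N := by positivity
  have hδ : c ^ 2 / 64 / N ≤ 1 / 2 := by
    rw [div_le_iff₀ hN]
    nlinarith
  set Q := popularPairs A (c / 4 * N)
  have hQsub : Q ⊆ A.offDiag := Finset.filter_subset _ _
  have hQ : c / 2 * N ^ 2 ≤ Q.card := by
    have h := hE.trans (addEnergy_le_card_popularPairs A (t := c / 4 * N) (by positivity))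
    change c * N ^ 3 ≤ N ^ 2 + c / 4 * N * N ^ 2 + Q.card * N at h
    have h' : N ^ 2 * 4 ≤ N ^ 2 * (c * N) := mul_le_mul_of_nonneg_left hcN (sq_nonneg N)
    refine le_of_mul_le_mul_right ?_ hN
    nlinarith
  have hrest : ((A.offDiag \ Q).card : ℝ) ≤ (1 - c / 2) * N ^ 2 := by
    have hoff : (A.offDiag.card : ℝ) ≤ (A.card : ℝ) ^ 2 := by
      have : A.offDiag.card ≤ A.card ^ 2 := by
        rw [Finset.offDiag_card, sq]
        exact Nat.sub_le _ _
      exact_mod_cast this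
    rw [Finset.card_sdiff_of_subset hQsub, Nat.cast_sub (Finset.card_le_card hQsub)]
    linarith
  set D := Q.image fun p => (p.1 : ℤ) - (p.2 : ℤ)
  have hD₀ : ∀ n ∈ D, n ≠ 0 := by
    intro n hn
    obtain ⟨p, hp, rfl⟩ := Finset.mem_image.mp hn
    have := (Finset.mem_offDiag.mp (hQsub hp)).2.2
    lia
  have hD : (D.card : ℝ) * (2 * (c ^ 2 / 64 / N)) ≤ c / 8 := by
    have h : (D.card : ℝ) * (c / 4 * N) ≤ N ^ 2 := card_image_popularPairs_mul_le A (c / 4 * N)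
    have h' : (D.card : ℝ) * c ≤ 4 * N := by
      refine le_of_mul_le_mul_right ?_ hN
      linarith
    rw [show (D.card : ℝ) * (2 * (c ^ 2 / 64 / N)) = (D.card * c) * (c / 32) / N by ring,
      div_le_iff₀ hN]
    nlinarith
  have hS := (measureReal_biUnion_nearIntegerSet_le hD₀ hδ₀ hδ).trans hD
  have hM := mul_measureReal_le_card_pairs (P := A.offDiag \ Q)
    (fun p hp => (Finset.mem_offDiag.mp (Finset.mem_sdiff.mp hp).1).2.2) hδ₀ hδ
    (2 * (1 - c / 4) * (c ^ 2 / 64) * N)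
  have hcover := one_le_measureReal_few_pairs A (c / 4 * N) (c ^ 2 / 64 / N)
    (2 * (1 - c / 4) * (c ^ 2 / 64) * N)
  set m := (volume.restrict (Set.Icc (0 : ℝ) 1)).real
    {α | 2 * (1 - c / 4) * (c ^ 2 / 64) * N ≤ (((A.offDiag \ Q).filter fun p =>
      dni (((p.1 : ℝ) - (p.2 : ℝ)) * α) ≤ c ^ 2 / 64 / N).card : ℝ)}
  have hm : m ≤ 1 - c / 4 := by
    have h : 2 * (1 - c / 4) * (c ^ 2 / 64) * N * m ≤
        (1 - c / 2) * N ^ 2 * (2 * (c ^ 2 / 64 / N)) :=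
      hM.trans (mul_le_mul_of_nonneg_right hrest (by positivity))
    have hpos : 0 < 2 * (c ^ 2 / 64) * N := by positivity
    have h₁ : (1 - c / 4) * m ≤ 1 - c / 2 := by
      refine le_of_mul_le_mul_left ?_ hpos
      calc 2 * (c ^ 2 / 64) * N * ((1 - c / 4) * m)
          = 2 * (1 - c / 4) * (c ^ 2 / 64) * N * m := by ring
        _ ≤ (1 - c / 2) * N ^ 2 * (2 * (c ^ 2 / 64 / N)) := h
        _ = 2 * (c ^ 2 / 64) * N * (1 - c / 2) := by field_simp
    refine le_of_mul_le_mul_left ?_ (show 0 < 1 - c / 4 by linarith)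
    nlinarith
  linarith

theorem exceptional_set_uniform_lower_bound (c : ℝ) (hc : 0 < c) :
    ∃ s : ℝ, 0 < s ∧ ∃ ct : ℝ, ct ∈ Set.Ioo (0 : ℝ) 1 ∧ ∃ κ : ℝ, 0 < κ ∧ ∃ N₀ : ℕ,
      ∀ N : ℕ, N₀ ≤ N → ∀ A : Finset ℕ, (∀ a ∈ A, 0 < a) → A.card = N →
        c * (N : ℝ) ^ 3 < (addEnergy A : ℝ) →
        ENNReal.ofReal κ ≤
          volume {α : ℝ | α ∈ Set.Icc (0 : ℝ) 1 ∧
            (((A ×ˢ A).filter fun p =>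
                p.1 ≠ p.2 ∧ dni (((p.1 : ℝ) - (p.2 : ℝ)) * α) ≤ s / N).card : ℝ) / N ≤
              2 * ct * s} := by
  obtain ⟨b, hb, hb₁, hbc⟩ : ∃ b : ℝ, 0 < b ∧ b ≤ 1 ∧ b ≤ c :=
    ⟨min c 1, lt_min hc one_pos, min_le_right _ _, min_le_left _ _⟩
  refine ⟨b ^ 2 / 64, by positivity, 1 - b / 4, ⟨by linarith, by linarith⟩, b / 8, by positivity,
    ⌈4 / b⌉₊, ?_⟩
  rintro N hN A - rfl hE
  have hA : 4 / b ≤ (A.card : ℝ) := (Nat.le_ceil _).trans (by exact_mod_cast hN)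
  have hpos : (0 : ℝ) < A.card := lt_of_lt_of_le (by positivity) hA
  have hEb : b * (A.card : ℝ) ^ 3 ≤ (addEnergy A : ℝ) :=
    (mul_le_mul_of_nonneg_right hbc (by positivity)).trans hE.le
  refine (ENNReal.ofReal_le_of_le_toReal (measureReal_few_pairs_ge hb hb₁ hA hEb)).trans ?_
  rw [Measure.restrict_apply' measurableSet_Icc]
  refine measure_mono fun α hα => ⟨hα.2, ?_⟩
  rw [div_le_iff₀ hpos]
  exact hα.1
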